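/- Let N ≥ 1 and n ≥ 2 be integers and ω = exp(2πi/N). Let r_1, ..., r_{n−2} ∈ ℂ and let b_1, ..., b_{n−1} ∈ ℂ be pairwise distinct with r_l^N ≠ b_k^N for all l, k. For a phase vector (ρ_1, ..., ρ_{n−2}) ∈ (ℤ/N)^{n−2} write a_l = r_l ω^{−ρ_l}. Then ∑_{(ρ_1,...,ρ_{n−2}) ∈ (ℤ/N)^{n−2}} ∏_{l=1}^{n−2} [ a_l · ∏_{j=l+1}^{n−2} (a_l − a_j) / ∏_{k=1}^{n−1} (a_l − b_k) ] = N^{n−2} (∏_{l=1}^{n−2} r_l^N) · ∏_{1≤k<k'≤n−1} (b_k^N − b_{k'}^N)/(b_k − b_{k'}) · ∏_{1≤l<l'≤n−2} (r_l^N − r_{l'}^N) / ∏_{k=1}^{n−1} ∏_{l=1}^{n−2} (b_k^N − r_l^N). -/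

import Mathlib

open Finset

/-- The Cauchy determinant. -/
theorem det_cauchy {K : Type*} [Field K] :
    ∀ (m : ℕ) (a b : Fin m → K), (∀ l k, a l - b k ≠ 0) →
      (Matrix.of fun k l => (a l - b k)⁻¹).det =
        (∏ k, ∏ k' ∈ Ioi k, (b k' - b k)) * (∏ l, ∏ j ∈ Ioi l, (a l - a j)) /
          ∏ l, ∏ k, (a l - b k)
  | 0, _, _, _ => by simp
  | m + 1, a, b, h => by
    have elimination : (Matrix.of fun k l => (a l - b k)⁻¹).det =
        (Matrix.of fun k l => (a l - b k)⁻¹ -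
          (if k = 0 then 0 else (a 0 - b 0) / (a 0 - b k)) * (a l - b 0)⁻¹).det := by
      refine Matrix.det_eq_of_forall_row_eq_smul_add_const
        (fun k => if k = 0 then 0 else (a 0 - b 0) / (a 0 - b k)) 0 (by simp) fun k l => ?_
      simp
    have minor : ((Matrix.of fun k l => (a l - b k)⁻¹ -
          (if k = 0 then 0 else (a 0 - b 0) / (a 0 - b k)) * (a l - b 0)⁻¹).submatrix
            Fin.succ Fin.succ) =
        Matrix.of fun k l : Fin m => (b k.succ - b 0) / (a 0 - b k.succ) *
          (Matrix.of fun k l : Fin m => (a 0 - a l.succ) / (a l.succ - b 0) *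
            (Matrix.of fun k l : Fin m => (a l.succ - b k.succ)⁻¹) k l) k l := by
      ext k l
      have h₁ := h 0 k.succ
      have h₂ := h l.succ 0
      have h₃ := h l.succ k.succ
      simp only [Matrix.submatrix_apply, Matrix.of_apply, Fin.succ_ne_zero, if_false]
      field_simp
      ring
    rw [elimination, Matrix.det_succ_column_zero, Fin.sum_univ_succ, Finset.sum_eq_zero, add_zero]
    · simp only [Fin.succAbove_zero]
      rw [minor, Matrix.det_mul_column, Matrix.det_mul_row,
        det_cauchy m (fun l => a l.succ) (fun k => b k.succ) fun l k => h _ _]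
      simp only [Fin.prod_univ_succ, Fin.prod_Ioi_succ, Fin.prod_Ioi_zero, Finset.prod_div_distrib,
        Finset.prod_mul_distrib]
      have h₀ := h 0 0
      have h₁ : ∏ k : Fin m, (a 0 - b k.succ) ≠ 0 := Finset.prod_ne_zero_iff.2 fun k _ => h _ _
      have h₂ : ∏ l : Fin m, (a l.succ - b 0) ≠ 0 := Finset.prod_ne_zero_iff.2 fun l _ => h _ _
      have h₃ : ∏ l : Fin m, ∏ k : Fin m, (a l.succ - b k.succ) ≠ 0 :=
        Finset.prod_ne_zero_iff.2 fun l _ => Finset.prod_ne_zero_iff.2 fun k _ => h _ _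
      simp
      field_simp
    · intro k _
      have h₁ := h 0 k.succ
      have h₀ := h 0 0
      have : (a 0 - b k.succ)⁻¹ - (a 0 - b 0) / (a 0 - b k.succ) * (a 0 - b 0)⁻¹ = 0 := by
        field_simp
        ring
      simp [this]

/-- The determinant obtained by subtracting the first row from the others in a Cauchy matrix
with one more row than columns, with the column of `a l` scaled by `a l`. -/
theorem det_scaled_cauchy_sub_row {K : Type*} [Field K] (m : ℕ) (a : Fin m → K)
    (b : Fin (m + 1) → K) (h : ∀ l k, a l - b k ≠ 0) :
    (Matrix.of fun k l : Fin m => a l / (a l - b k.succ) - a l / (a l - b 0)).det =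
      (∏ l, (a l * (∏ j ∈ Ioi l, (a l - a j)) / ∏ k, (a l - b k))) *
        ∏ k, ∏ k' ∈ Ioi k, (b k' - b k) := by
  have factor : (Matrix.of fun k l : Fin m => a l / (a l - b k.succ) - a l / (a l - b 0)) =
      Matrix.of fun k l : Fin m => (b k.succ - b 0) *
        (Matrix.of fun k l : Fin m => a l / (a l - b 0) *
          (Matrix.of fun k l : Fin m => (a l - b k.succ)⁻¹) k l) k l := by
    ext k l
    have h₁ := h l 0
    have h₂ := h l k.succ
    simp only [Matrix.of_apply]
    field_simp
    ring
  rw [factor, Matrix.det_mul_column, Matrix.det_mul_row,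
    det_cauchy m a (fun k => b k.succ) fun l k => h _ _]
  simp only [Fin.prod_univ_succ, Fin.prod_Ioi_succ, Fin.prod_Ioi_zero, Finset.prod_div_distrib,
    Finset.prod_mul_distrib]
  have h₂ : ∏ l : Fin m, (a l - b 0) ≠ 0 := Finset.prod_ne_zero_iff.2 fun l _ => h _ _
  have h₃ : ∏ l : Fin m, ∏ k : Fin m, (a l - b k.succ) ≠ 0 :=
    Finset.prod_ne_zero_iff.2 fun l _ => Finset.prod_ne_zero_iff.2 fun k _ => h _ _
  field_simp

/-- The determinant distributes over sums of columns. -/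
theorem sum_det_columns {R ι κ : Type*} [CommRing R] [Fintype ι] [DecidableEq ι] [Fintype κ]
    (F : ι → κ → ι → R) :
    ∑ ρ : ι → κ, (Matrix.of fun k l => F l (ρ l) k).det =
      (Matrix.of fun k l => ∑ s, F l s k).det := by
  have h := (Matrix.detRowAlternating (n := ι) (R := R)).toMultilinearMap.map_sum F
  have hrow : (Matrix.of fun k l => ∑ s, F l s k) =
      (Matrix.of fun l => ∑ s, F l s).transpose := by
    ext k l
    simp
  rw [hrow, Matrix.det_transpose]
  refine Eq.trans (Finset.sum_congr rfl fun ρ _ => ?_) h.symm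
  rw [← Matrix.det_transpose]
  rfl

theorem sum_div_sub_of_isPrimitiveRoot {K : Type*} [Field K] {N : ℕ} {ζ : K}
    (hN : 0 < N) (hζ : IsPrimitiveRoot ζ N) (r b : K) (h : r ^ N ≠ b ^ N) :
    ∑ s : Fin N, r * ζ ^ (s : ℕ) / (r * ζ ^ (s : ℕ) - b) =
      N * (r ^ N / (r ^ N - b ^ N)) := by
  have hRB : r ^ N - b ^ N ≠ 0 := sub_ne_zero.2 h
  have hpow (s : ℕ) : (r * ζ ^ s) ^ N = r ^ N := by
    rw [mul_pow, ← pow_mul, mul_comm s, pow_mul, hζ.pow_eq_one, one_pow, mul_one]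
  have expand (s : ℕ) : r * ζ ^ s / (r * ζ ^ s - b) =
      (∑ i ∈ range N, r ^ (i + 1) * b ^ (N - 1 - i) * (ζ ^ (i + 1)) ^ s) / (r ^ N - b ^ N) := by
    have hgeom := (Commute.all (r * ζ ^ s) b).geom_sum₂_mul N
    rw [hpow] at hgeom
    have hne : r * ζ ^ s - b ≠ 0 := by
      intro h0
      rw [h0, mul_zero] at hgeom
      exact hRB hgeom.symm
    have hsum : ∑ i ∈ range N, r ^ (i + 1) * b ^ (N - 1 - i) * (ζ ^ (i + 1)) ^ s =
        r * ζ ^ s * ∑ i ∈ range N, (r * ζ ^ s) ^ i * b ^ (N - 1 - i) := by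
      rw [Finset.mul_sum]
      refine Finset.sum_congr rfl fun i _ => ?_
      rw [← pow_mul, mul_comm (i + 1) s, pow_mul]
      ring
    rw [hsum, div_eq_div_iff hne hRB, ← hgeom]
    ring
  obtain ⟨M, rfl⟩ : ∃ M, N = M + 1 := ⟨N - 1, by omega⟩
  rw [Fin.sum_univ_eq_sum_range (fun s => r * ζ ^ s / (r * ζ ^ s - b)),
    Finset.sum_congr rfl fun s _ => expand s, ← Finset.sum_div, Finset.sum_comm,
    Finset.sum_range_succ, Finset.sum_eq_zero, hζ.pow_eq_one]
  · simp
    ring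
  · intro i hi
    have hi := Finset.mem_range.1 hi
    have hne : ζ ^ (i + 1) ≠ 1 := hζ.pow_ne_one_of_pos_of_lt (by omega) (by omega)
    rw [← Finset.mul_sum, geom_sum_eq hne, ← pow_mul, mul_comm (i + 1), pow_mul, hζ.pow_eq_one]
    simp

theorem sum_prod_phases {K : Type*} [Field K] {N : ℕ} {ζ : K} (hN : 0 < N)
    (hζ : IsPrimitiveRoot ζ N) (m : ℕ) (r : Fin m → K) (b : Fin (m + 1) → K)
    (hb : Function.Injective b) (hrb : ∀ l k, r l ^ N ≠ b k ^ N) :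
    ∑ ρ : Fin m → Fin N, ∏ l, (r l * ζ ^ (ρ l : ℕ) *
        (∏ j ∈ Ioi l, (r l * ζ ^ (ρ l : ℕ) - r j * ζ ^ (ρ j : ℕ))) /
          ∏ k, (r l * ζ ^ (ρ l : ℕ) - b k)) =
      (N : K) ^ m * (∏ l, r l ^ N) *
        (∏ k, ∏ k' ∈ Ioi k, (b k ^ N - b k' ^ N) / (b k - b k')) *
        (∏ l, ∏ l' ∈ Ioi l, (r l ^ N - r l' ^ N)) / ∏ k, ∏ l, (b k ^ N - r l ^ N) := by
  have hne (l : Fin m) (s : Fin N) (k : Fin (m + 1)) : r l * ζ ^ (s : ℕ) - b k ≠ 0 := by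
    refine fun h0 => hrb l k ?_
    rw [← sub_eq_zero.1 h0, mul_pow, ← pow_mul, mul_comm (s : ℕ), pow_mul, hζ.pow_eq_one,
      one_pow, mul_one]
  have hV : ∏ k, ∏ k' ∈ Ioi k, (b k' - b k) ≠ 0 :=
    Finset.prod_ne_zero_iff.2 fun k _ => Finset.prod_ne_zero_iff.2 fun k' hk' =>
      sub_ne_zero.2 (hb.ne (Finset.mem_Ioi.1 hk').ne')
  refine mul_right_cancel₀ hV ?_
  rw [Finset.sum_mul, ← Finset.sum_congr rfl fun ρ _ => det_scaled_cauchy_sub_row m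
      (fun l => r l * ζ ^ (ρ l : ℕ)) b fun l k => hne l (ρ l) k,
    sum_det_columns fun (l : Fin m) (s : Fin N) (k : Fin m) =>
      r l * ζ ^ (s : ℕ) / (r l * ζ ^ (s : ℕ) - b k.succ) -
        r l * ζ ^ (s : ℕ) / (r l * ζ ^ (s : ℕ) - b 0)]
  simp only [Finset.sum_sub_distrib, sum_div_sub_of_isPrimitiveRoot hN hζ _ _ (hrb _ _), ← mul_sub]
  have hdet := Matrix.det_mul_row (fun _ : Fin m => (N : K)) (Matrix.of fun k l : Fin m =>
    r l ^ N / (r l ^ N - b k.succ ^ N) - r l ^ N / (r l ^ N - b 0 ^ N))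
  simp only [Matrix.of_apply] at hdet
  rw [hdet, det_scaled_cauchy_sub_row m (fun l => r l ^ N) (fun k => b k ^ N)
    fun l k => sub_ne_zero.2 (hrb l k)]
  have hquot : ∏ k, ∏ k' ∈ Ioi k, (b k ^ N - b k' ^ N) / (b k - b k') =
      (∏ k, ∏ k' ∈ Ioi k, (b k' ^ N - b k ^ N)) / ∏ k, ∏ k' ∈ Ioi k, (b k' - b k) := by
    simp only [← Finset.prod_div_distrib]
    refine Finset.prod_congr rfl fun k _ => Finset.prod_congr rfl fun k' _ => ?_
    rw [← neg_sub, ← neg_sub (b k'), neg_div_neg_eq]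
  have hden : ∏ k, ∏ l, (b k ^ N - r l ^ N) = ∏ l, ∏ k, (r l ^ N - b k ^ N) := by
    have hsign (k : Fin (m + 1)) (l : Fin m) : b k ^ N - r l ^ N = -1 * (r l ^ N - b k ^ N) := by
      ring
    rw [Finset.prod_comm]
    simp only [hsign, Finset.prod_mul_distrib]
    simp only [Finset.prod_const, Finset.card_univ, Fintype.card_fin, ← pow_mul]
    rw [mul_comm (m + 1), (Nat.even_mul_succ_self m).neg_one_pow, one_mul]
  rw [hquot, hden]
  simp only [Finset.prod_div_distrib, Finset.prod_mul_distrib, Finset.prod_const,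
    Finset.card_univ, Fintype.card_fin]
  field_simp

theorem main_summation_formula (N n : ℕ) (hN : 1 ≤ N) (hn : 2 ≤ n) (ω : ℂ)
    (hω : ω = Complex.exp (2 * (Real.pi : ℂ) * Complex.I / (N : ℂ)))
    (r : Fin (n - 2) → ℂ) (b : Fin (n - 1) → ℂ) (hb : Function.Injective b)
    (hrb : ∀ l k, (r l) ^ N ≠ (b k) ^ N) :
    ∑ ρ : Fin (n - 2) → Fin N,
        ∏ l : Fin (n - 2),
          (r l * ω ^ (-((ρ l : ℕ) : ℤ)) *
            (∏ j ∈ Finset.univ.filter (fun j => l < j),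
              (r l * ω ^ (-((ρ l : ℕ) : ℤ)) - r j * ω ^ (-((ρ j : ℕ) : ℤ)))) /
            ∏ k : Fin (n - 1), (r l * ω ^ (-((ρ l : ℕ) : ℤ)) - b k)) =
      (N : ℂ) ^ (n - 2) * (∏ l : Fin (n - 2), (r l) ^ N) *
        (∏ k : Fin (n - 1), ∏ k' ∈ Finset.univ.filter (fun k' => k < k'),
          ((b k) ^ N - (b k') ^ N) / (b k - b k')) *
        (∏ l : Fin (n - 2), ∏ l' ∈ Finset.univ.filter (fun l' => l < l'),
          ((r l) ^ N - (r l') ^ N)) /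
        ∏ k : Fin (n - 1), ∏ l : Fin (n - 2), ((b k) ^ N - (r l) ^ N) := by
  obtain ⟨m, rfl⟩ : ∃ m, n = m + 2 := ⟨n - 2, by omega⟩
  have hζ : IsPrimitiveRoot ω⁻¹ N := by
    rw [hω]
    exact (Complex.isPrimitiveRoot_exp N (by omega)).inv
  simp only [zpow_neg, zpow_natCast, ← inv_pow, Finset.filter_lt_eq_Ioi]
  exact sum_prod_phases hN hζ m r b hb hrb
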